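/- (Theorem 4.3) If M is minimal (H ≡ 0 on U) and has no parabolic points, then every parallel surface x* = x + ρ n of M (ρ ≠ 0, 1 + ρ²K ≠ 0 on U) is of null III-type 2 with respect to the common third fundamental form: x* = x + (ρ n) where Δ^{III} x = 0, Δ^{III}(ρ n) = 2(ρ n), both summands are nonconstant, and x* is not of null III-type 1, i.e. Δ^{III} x* ≠ 0 (equivalently, x* is not minimal). -/

import Mathlib

open Matrix

noncomputable section

/-- The parameter domain `ℝ²`. -/
abbrev Param : Type := Fin 2 → ℝ

/-- Vectors in Euclidean 3-space. -/
abbrev Vec3 : Type := Fin 3 → ℝ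

/-- Partial derivative of a vector-valued function in the `i`-th coordinate direction. -/
noncomputable def pd (i : Fin 2) (f : Param → Vec3) (u : Param) : Vec3 :=
  fderiv ℝ f u (Pi.single i 1)

/-- Partial derivative of a scalar function in the `i`-th coordinate direction. -/
noncomputable def pds (i : Fin 2) (f : Param → ℝ) (u : Param) : ℝ :=
  fderiv ℝ f u (Pi.single i 1)

/-- The Euclidean inner product on `ℝ³`. -/
def dot3 (a b : Vec3) : ℝ := ∑ k, a k * b k

/-- The Euclidean norm on `ℝ³`. -/
noncomputable def norm3 (a : Vec3) : ℝ := Real.sqrt (dot3 a a)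

/-- The Gauss map `n = (x_{/1} × x_{/2}) / ‖x_{/1} × x_{/2}‖`. -/
noncomputable def gaussMap (x : Param → Vec3) (u : Param) : Vec3 :=
  (norm3 (crossProduct (pd 0 x u) (pd 1 x u)))⁻¹ • crossProduct (pd 0 x u) (pd 1 x u)

/-- Components `g_{ij}` of the first fundamental form. -/
noncomputable def fformI (x : Param → Vec3) (u : Param) : Matrix (Fin 2) (Fin 2) ℝ :=
  Matrix.of fun i j => dot3 (pd i x u) (pd j x u)

/-- Components `b_{ij} = ⟨∂²x/∂u^i∂u^j, n⟩` of the second fundamental form. -/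
noncomputable def fformII (x : Param → Vec3) (u : Param) : Matrix (Fin 2) (Fin 2) ℝ :=
  Matrix.of fun i j => dot3 (pd i (pd j x) u) (gaussMap x u)

/-- Components `e_{ij} = ⟨n_{/i}, n_{/j}⟩` of the third fundamental form. -/
noncomputable def fformIII (x : Param → Vec3) (u : Param) : Matrix (Fin 2) (Fin 2) ℝ :=
  Matrix.of fun i j => dot3 (pd i (gaussMap x) u) (pd j (gaussMap x) u)

/-- The Gauss curvature `K = det(b_{ij}) / det(g_{ij})`. -/
noncomputable def gaussCurv (x : Param → Vec3) (u : Param) : ℝ :=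
  (fformII x u).det / (fformI x u).det

/-- The mean curvature `H = (1/2) g^{ij} b_{ij}`. -/
noncomputable def meanCurv (x : Param → Vec3) (u : Param) : ℝ :=
  (1 / 2) * ∑ i, ∑ j, (fformI x u)⁻¹ i j * fformII x u i j

/-- First Beltrami operator `∇^J(φ, ψ) = a^{ij} φ_{/i} ψ_{/j}` with respect to the
fundamental form with component matrix `a`, for scalar `φ` and `ℝ³`-valued `ψ`. -/
noncomputable def beltrami1 (a : Param → Matrix (Fin 2) (Fin 2) ℝ)
    (φ : Param → ℝ) (ψ : Param → Vec3) (u : Param) : Vec3 :=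
  ∑ i, ∑ j, ((a u)⁻¹ i j * pds i φ u) • pd j ψ u

/-- Second Beltrami operator
`Δ^J f = −(1/√|det a|) ∂_i (√|det a| a^{ij} ∂_j f)` with respect to the fundamental
form with component matrix `a`, acting componentwise on `ℝ³`-valued functions. -/
noncomputable def beltrami2 (a : Param → Matrix (Fin 2) (Fin 2) ℝ)
    (f : Param → Vec3) (u : Param) : Vec3 :=
  -((Real.sqrt |(a u).det|)⁻¹ •
    ∑ i, ∑ j, pd i (fun v => (Real.sqrt |(a v).det| * (a v)⁻¹ i j) • pd j f v) u)

/-- `x` is an immersion on `U`: the partial derivatives are linearly independent. -/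
def Immersed (x : Param → Vec3) (U : Set Param) : Prop :=
  ∀ u ∈ U, LinearIndependent ℝ ![pd 0 x u, pd 1 x u]

/-- `f` is nonconstant on `U`. -/
def NonconstOn (f : Param → Vec3) (U : Set Param) : Prop :=
  ¬ ∃ v : Vec3, ∀ u ∈ U, f u = v

/-!
Beltrami's formula says `Δ^I y = -2H n` for every surface `y`: the flux `√|g| g^{ij} y_{/j}`
has components `y_{/2} × n` and `n × y_{/1}`, and in its divergence the second derivatives of `y`
cancel, leaving the trace of `dn`.

Applied to the Gauss map `n`, itself an immersion into the unit sphere whose first fundamental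
form is the third fundamental form of `x`, the formula gives `Δ^{III} n = 2n`. For minimal `x`
the identity `III = 2H II - K I` becomes `III = -K I` with `-K > 0`. In dimension two
`√|g| g^{ij}` is conformally invariant, so `Δ^{III} x` is a multiple of `Δ^I x = -2H n = 0`.
-/

open Filter Topology

section VectorAlgebra

variable {R : Type*} [CommRing R]

lemma cross_eq_smul_of_dotProduct_eq_zero {p q n : Fin 3 → R} (hn : n ⬝ᵥ n = 1)
    (hp : p ⬝ᵥ n = 0) (hq : q ⬝ᵥ n = 0) : p ⨯₃ q = (p ⨯₃ q ⬝ᵥ n) • n := by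
  have h := cross_cross_eq_smul_sub_smul' n (p ⨯₃ q) n
  rw [cross_cross_eq_smul_sub_smul, hp, hq, hn, zero_smul, zero_smul, sub_zero, map_zero,
    one_smul] at h
  exact sub_eq_zero.1 h.symm

lemma gram_det_mul_dotProduct (a b p q : Fin 3 → R) :
    (a ⬝ᵥ a * b ⬝ᵥ b - a ⬝ᵥ b * a ⬝ᵥ b) * p ⬝ᵥ q =
      b ⬝ᵥ b * (p ⬝ᵥ a * q ⬝ᵥ a) - a ⬝ᵥ b * (p ⬝ᵥ a * q ⬝ᵥ b + p ⬝ᵥ b * q ⬝ᵥ a) +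
        a ⬝ᵥ a * (p ⬝ᵥ b * q ⬝ᵥ b) + p ⬝ᵥ (a ⨯₃ b) * q ⬝ᵥ (a ⨯₃ b) := by
  simp only [cross_apply, vec3_dotProduct, Matrix.cons_val]
  ring

lemma norm3_mul_self (a : Vec3) : norm3 a * norm3 a = a ⬝ᵥ a :=
  Real.mul_self_sqrt (Finset.sum_nonneg fun _ _ => mul_self_nonneg _)

lemma norm3_nonneg (a : Vec3) : 0 ≤ norm3 a :=
  Real.sqrt_nonneg _

lemma norm3_pos {a : Vec3} (ha : a ≠ 0) : 0 < norm3 a :=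
  Real.sqrt_pos.2 (dotProduct_self_star_pos_iff.2 ha)

end VectorAlgebra

section TwoByTwo

variable {k : Type*} [Field k]

lemma mul_self_eq_trace_smul_sub_det_smul_one {R : Type*} [CommRing R]
    (M : Matrix (Fin 2) (Fin 2) R) : M * M = M.trace • M - M.det • 1 := by
  nontriviality R
  have h := M.aeval_self_charpoly
  simp only [M.charpoly_fin_two, map_add, map_sub, map_mul, map_pow, Polynomial.aeval_X,
    Polynomial.aeval_C, Algebra.algebraMap_eq_smul_one, smul_one_mul] at h
  rw [← sq, ← sub_eq_zero, ← h]
  abel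

lemma mul_inv_mul_eq_trace_smul_sub (B : Matrix (Fin 2) (Fin 2) k)
    {G : Matrix (Fin 2) (Fin 2) k} (hG : G.det ≠ 0) :
    B * G⁻¹ * B = (G⁻¹ * B).trace • B - (B.det / G.det) • G := by
  have hGu : IsUnit G.det := hG.isUnit
  calc B * G⁻¹ * B = G * ((G⁻¹ * B) * (G⁻¹ * B)) := by
        simp only [← Matrix.mul_assoc, Matrix.mul_nonsing_inv G hGu, Matrix.one_mul]
    _ = (G⁻¹ * B).trace • (G * (G⁻¹ * B)) - (G⁻¹ * B).det • G := by
        rw [mul_self_eq_trace_smul_sub_det_smul_one, Matrix.mul_sub, Matrix.mul_smul,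
          Matrix.mul_smul, Matrix.mul_one]
    _ = (G⁻¹ * B).trace • B - (B.det / G.det) • G := by
        rw [Matrix.mul_nonsing_inv_cancel_left _ _ hGu, Matrix.det_mul, Matrix.det_nonsing_inv,
          Ring.inverse_eq_inv', mul_comm, div_eq_mul_inv]

lemma inv_apply_eq_inv_det_mul {m : Type*} [Fintype m] [DecidableEq m]
    (A : Matrix m m k) (i j : m) : A⁻¹ i j = A.det⁻¹ * A.adjugate i j := by
  rw [Matrix.inv_def, Ring.inverse_eq_inv', Matrix.smul_apply, smul_eq_mul]

lemma sqrt_abs_det_smul (c : ℝ) (A : Matrix (Fin 2) (Fin 2) ℝ) :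
    √|(c • A).det| = |c| * √|A.det| := by
  rw [Matrix.det_smul, Fintype.card_fin, abs_mul, abs_pow, Real.sqrt_mul (by positivity),
    Real.sqrt_sq (abs_nonneg c)]

lemma sqrt_abs_det_smul_mul_inv_smul {c : ℝ} (hc : 0 < c) (A : Matrix (Fin 2) (Fin 2) ℝ)
    (i j : Fin 2) :
    √|(c • A).det| * (c • A)⁻¹ i j = √|A.det| * A⁻¹ i j := by
  rw [sqrt_abs_det_smul, inv_apply_eq_inv_det_mul, inv_apply_eq_inv_det_mul, Matrix.det_smul,
    Matrix.adjugate_smul, abs_of_pos hc]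
  simp only [Fintype.card_fin, Matrix.smul_apply, smul_eq_mul, Nat.add_one_sub_one, pow_one]
  field_simp

end TwoByTwo

section Bilinear

variable {D E F G : Type*} [NormedAddCommGroup D] [NormedSpace ℝ D]
  [NormedAddCommGroup E] [NormedSpace ℝ E] [FiniteDimensional ℝ E]
  [NormedAddCommGroup F] [NormedSpace ℝ F] [FiniteDimensional ℝ F]
  [NormedAddCommGroup G] [NormedSpace ℝ G]
  (B : E →ₗ[ℝ] F →ₗ[ℝ] G) {f : D → E} {g : D → F} {u : D}

lemma fderiv_bilinear_apply (hf : DifferentiableAt ℝ f u) (hg : DifferentiableAt ℝ g u) (w : D) :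
    fderiv ℝ (fun v => B (f v) (g v)) u w =
      B (fderiv ℝ f u w) (g u) + B (f u) (fderiv ℝ g u w) := by
  have h := B.toContinuousBilinearMap.fderiv_of_bilinear hf hg
  simp only [LinearMap.toContinuousBilinearMap_apply] at h
  rw [h, add_comm]
  rfl

lemma contDiffAt_bilinear {n : WithTop ℕ∞} (hf : ContDiffAt ℝ n f u) (hg : ContDiffAt ℝ n g u) :
    ContDiffAt ℝ n (fun v => B (f v) (g v)) u :=
  (B.toContinuousBilinearMap.contDiff.contDiffAt.comp u hf).clm_apply hg

end Bilinear

section PartialDerivatives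

variable {f g : Param → Vec3} {u : Param}

lemma pd_congr (h : f =ᶠ[𝓝 u] g) (i : Fin 2) : pd i f u = pd i g u := by
  rw [pd, pd, h.fderiv_eq]

lemma pd_add (hf : DifferentiableAt ℝ f u) (hg : DifferentiableAt ℝ g u) (i : Fin 2) :
    pd i (fun v => f v + g v) u = pd i f u + pd i g u := by
  simp only [pd, fderiv_fun_add hf hg, _root_.add_apply]

lemma pd_sum {ι : Type*} {s : Finset ι} {F : ι → Param → Vec3}
    (hF : ∀ k ∈ s, DifferentiableAt ℝ (F k) u) (i : Fin 2) :
    pd i (fun v => ∑ k ∈ s, F k v) u = ∑ k ∈ s, pd i (F k) u := by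
  simp only [pd, fderiv_fun_sum hF, _root_.sum_apply]

lemma pd_const_smul (c : ℝ) (f : Param → Vec3) (i : Fin 2) (u : Param) :
    pd i (fun v => c • f v) u = c • pd i f u := by
  change fderiv ℝ (c • f) u _ = _
  rw [fderiv_const_smul_field, Pi.smul_apply, _root_.smul_apply, pd]

lemma pd_cross (hf : DifferentiableAt ℝ f u) (hg : DifferentiableAt ℝ g u) (i : Fin 2) :
    pd i (fun v => f v ⨯₃ g v) u = pd i f u ⨯₃ g u + f u ⨯₃ pd i g u :=
  fderiv_bilinear_apply crossProduct hf hg _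

lemma pd_dotProduct_add_dotProduct_pd_eq_zero {c : ℝ} (hf : DifferentiableAt ℝ f u)
    (hg : DifferentiableAt ℝ g u) (h : ∀ᶠ v in 𝓝 u, f v ⬝ᵥ g v = c) (i : Fin 2) :
    pd i f u ⬝ᵥ g u + f u ⬝ᵥ pd i g u = 0 := by
  have hconst : (fun v => f v ⬝ᵥ g v) =ᶠ[𝓝 u] fun _ => c := h
  calc pd i f u ⬝ᵥ g u + f u ⬝ᵥ pd i g u
      = fderiv ℝ (fun v => f v ⬝ᵥ g v) u (Pi.single i 1) :=
        (fderiv_bilinear_apply (dotProductBilin ℝ ℝ) hf hg _).symm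
    _ = 0 := by rw [hconst.fderiv_eq, fderiv_fun_const, Pi.zero_apply, _root_.zero_apply]

lemma pd_dotProduct_self_eq_zero {c : ℝ} (hf : DifferentiableAt ℝ f u)
    (h : ∀ᶠ v in 𝓝 u, f v ⬝ᵥ f v = c) (i : Fin 2) : pd i f u ⬝ᵥ f u = 0 := by
  have hderiv := pd_dotProduct_add_dotProduct_pd_eq_zero hf hf h i
  rw [dotProduct_comm (f u)] at hderiv
  linarith

lemma contDiffAt_pd {m n : WithTop ℕ∞} (hf : ContDiffAt ℝ n f u) (hmn : m + 1 ≤ n) (i : Fin 2) :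
    ContDiffAt ℝ m (pd i f) u :=
  (hf.fderiv_right hmn).clm_apply contDiffAt_const

lemma differentiableAt_pd (hf : ContDiffAt ℝ 2 f u) (i : Fin 2) :
    DifferentiableAt ℝ (pd i f) u :=
  (contDiffAt_pd hf (m := 1) (by norm_num) i).differentiableAt one_ne_zero

lemma pd_comm (hf : ContDiffAt ℝ 2 f u) (i j : Fin 2) : pd i (pd j f) u = pd j (pd i f) u := by
  have hd : DifferentiableAt ℝ (fderiv ℝ f) u :=
    (hf.fderiv_right (m := 1) (by norm_num)).differentiableAt one_ne_zero
  have hsecond (i j : Fin 2) :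
      pd i (pd j f) u = fderiv ℝ (fderiv ℝ f) u (Pi.single i 1) (Pi.single j 1) := by
    change fderiv ℝ (fun v => fderiv ℝ f v (Pi.single j 1)) u _ = _
    rw [fderiv_clm_apply hd (differentiableAt_const _)]
    simp
  rw [hsecond, hsecond]
  exact hf.isSymmSndFDerivAt (by simp) _ _

end PartialDerivatives

section Beltrami

/-- The `i`-th component `√|det a| a^{ij} f_{/j}` of the vector density whose divergence is,
up to the factor `-1/√|det a|`, the second Beltrami operator `beltrami2 a f`. -/
def beltramiFlux (a : Param → Matrix (Fin 2) (Fin 2) ℝ) (f : Param → Vec3) (i : Fin 2)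
    (v : Param) : Vec3 :=
  ∑ j, (√|(a v).det| * (a v)⁻¹ i j) • pd j f v

variable {a b : Param → Matrix (Fin 2) (Fin 2) ℝ} {f g : Param → Vec3} {u : Param}

lemma differentiableAt_sqrt_abs_det_mul_inv
    (ha : ∀ i j, DifferentiableAt ℝ (fun v => a v i j) u) (hdet : (a u).det ≠ 0) (i j : Fin 2) :
    DifferentiableAt ℝ (fun v => √|(a v).det| * (a v)⁻¹ i j) u := by
  have hd : DifferentiableAt ℝ (fun v => (a v).det) u := by
    simp only [Matrix.det_fin_two]
    exact ((ha 0 0).mul (ha 1 1)).sub ((ha 0 1).mul (ha 1 0))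
  have hadj : DifferentiableAt ℝ (fun v => (a v).adjugate i j) u := by
    fin_cases i <;> fin_cases j <;> simp [Matrix.adjugate_fin_two, ha]
  simp only [inv_apply_eq_inv_det_mul]
  exact ((hd.abs hdet).sqrt (abs_ne_zero.2 hdet)).mul ((hd.inv hdet).mul hadj)

lemma beltrami2_eq_sum_pd_beltramiFlux (ha : ∀ i j, DifferentiableAt ℝ (fun v => a v i j) u)
    (hdet : (a u).det ≠ 0) (hf : ContDiffAt ℝ 2 f u) :
    beltrami2 a f u = -((√|(a u).det|)⁻¹ • ∑ i, pd i (beltramiFlux a f i) u) := by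
  unfold beltrami2 beltramiFlux
  congr! 3 with i
  exact (pd_sum (fun j _ => (differentiableAt_sqrt_abs_det_mul_inv ha hdet i j).smul
    (differentiableAt_pd hf j)) i).symm

lemma beltrami2_const_smul (a : Param → Matrix (Fin 2) (Fin 2) ℝ) (c : ℝ) (f : Param → Vec3)
    (u : Param) : beltrami2 a (fun v => c • f v) u = c • beltrami2 a f u := by
  simp only [beltrami2, pd_const_smul, smul_comm _ c, ← Finset.smul_sum, smul_neg]

lemma beltrami2_add (ha : ∀ i j, DifferentiableAt ℝ (fun v => a v i j) u) (hdet : (a u).det ≠ 0)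
    (hf : ContDiffAt ℝ 2 f u) (hg : ContDiffAt ℝ 2 g u) :
    beltrami2 a (fun v => f v + g v) u = beltrami2 a f u + beltrami2 a g u := by
  have hterm (i j : Fin 2) :
      pd i (fun v => (√|(a v).det| * (a v)⁻¹ i j) • pd j (fun w => f w + g w) v) u =
        pd i (fun v => (√|(a v).det| * (a v)⁻¹ i j) • pd j f v) u +
          pd i (fun v => (√|(a v).det| * (a v)⁻¹ i j) • pd j g v) u := by
    have hcoeff := differentiableAt_sqrt_abs_det_mul_inv ha hdet i j
    rw [← pd_add (hcoeff.fun_smul (differentiableAt_pd hf j))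
      (hcoeff.fun_smul (differentiableAt_pd hg j))]
    refine pd_congr ?_ i
    filter_upwards [hf.eventually (by simp), hg.eventually (by simp)] with v hfv hgv
    rw [pd_add (hfv.differentiableAt two_ne_zero) (hgv.differentiableAt two_ne_zero), smul_add]
  simp only [beltrami2, hterm, Finset.sum_add_distrib, smul_add, neg_add]

lemma beltrami2_of_conformal {c : Param → ℝ} (hab : ∀ᶠ v in 𝓝 u, a v = c v • b v)
    (hc : ∀ᶠ v in 𝓝 u, 0 < c v) (f : Param → Vec3) :
    beltrami2 a f u = (c u)⁻¹ • beltrami2 b f u := by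
  have hterm (i j : Fin 2) : pd i (fun v => (√|(a v).det| * (a v)⁻¹ i j) • pd j f v) u =
      pd i (fun v => (√|(b v).det| * (b v)⁻¹ i j) • pd j f v) u := by
    refine pd_congr ?_ i
    filter_upwards [hab, hc] with v hv hcv
    rw [hv, sqrt_abs_det_smul_mul_inv_smul hcv]
  simp only [beltrami2, hterm]
  rw [hab.self_of_nhds, sqrt_abs_det_smul, abs_of_pos hc.self_of_nhds, mul_inv, smul_neg,
    smul_smul]

end Beltrami

section FundamentalForms

variable {x : Param → Vec3} {u : Param}

lemma fformI_apply (x : Param → Vec3) (u : Param) (i j : Fin 2) :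
    fformI x u i j = pd i x u ⬝ᵥ pd j x u := rfl

lemma fformII_apply (x : Param → Vec3) (u : Param) (i j : Fin 2) :
    fformII x u i j = pd i (pd j x) u ⬝ᵥ gaussMap x u := rfl

lemma fformIII_eq_fformI_gaussMap (x : Param → Vec3) : fformIII x = fformI (gaussMap x) := rfl

lemma fformI_apply_comm (x : Param → Vec3) (u : Param) (i j : Fin 2) :
    fformI x u i j = fformI x u j i := by
  rw [fformI_apply, fformI_apply, dotProduct_comm]

lemma det_fformI (x : Param → Vec3) (u : Param) :
    (fformI x u).det = norm3 (pd 0 x u ⨯₃ pd 1 x u) * norm3 (pd 0 x u ⨯₃ pd 1 x u) := by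
  rw [norm3_mul_self, cross_dot_cross, Matrix.det_fin_two]
  simp only [fformI_apply]

lemma sqrt_abs_det_fformI (x : Param → Vec3) (u : Param) :
    √|(fformI x u).det| = norm3 (pd 0 x u ⨯₃ pd 1 x u) := by
  rw [det_fformI, abs_mul_self, Real.sqrt_mul_self (norm3_nonneg _)]

lemma det_fformI_ne_zero_iff :
    (fformI x u).det ≠ 0 ↔ pd 0 x u ⨯₃ pd 1 x u ≠ 0 := by
  rw [det_fformI, norm3_mul_self, ne_eq, dotProduct_self_eq_zero]

lemma differentiableAt_fformI (hx : ContDiffAt ℝ 2 x u) (i j : Fin 2) :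
    DifferentiableAt ℝ (fun v => fformI x v i j) u :=
  (contDiffAt_bilinear (dotProductBilin ℝ ℝ) (contDiffAt_pd hx (m := 1) (by norm_num) i)
    (contDiffAt_pd hx (by norm_num) j)).differentiableAt one_ne_zero

lemma eventually_cross_pd_ne_zero {n : WithTop ℕ∞} (hx : ContDiffAt ℝ n x u) (hn : 1 ≤ n)
    (hreg : pd 0 x u ⨯₃ pd 1 x u ≠ 0) : ∀ᶠ v in 𝓝 u, pd 0 x v ⨯₃ pd 1 x v ≠ 0 :=
  (contDiffAt_bilinear crossProduct (contDiffAt_pd hx (m := 0) (by simpa using hn) 0)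
    (contDiffAt_pd hx (by simpa using hn) 1)).continuousAt.eventually_ne hreg

end FundamentalForms

section GaussMap

variable {x : Param → Vec3} {u : Param}

lemma gaussMap_dotProduct_pd (x : Param → Vec3) (u : Param) (j : Fin 2) :
    gaussMap x u ⬝ᵥ pd j x u = 0 := by
  rw [gaussMap, smul_dotProduct, dotProduct_comm]
  fin_cases j <;> simp

lemma norm3_smul_gaussMap (hreg : pd 0 x u ⨯₃ pd 1 x u ≠ 0) :
    norm3 (pd 0 x u ⨯₃ pd 1 x u) • gaussMap x u = pd 0 x u ⨯₃ pd 1 x u :=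
  smul_inv_smul₀ (norm3_pos hreg).ne' _

lemma gaussMap_dotProduct_self (hreg : pd 0 x u ⨯₃ pd 1 x u ≠ 0) :
    gaussMap x u ⬝ᵥ gaussMap x u = 1 := by
  have hW := (norm3_pos hreg).ne'
  rw [gaussMap, smul_dotProduct, dotProduct_smul, ← norm3_mul_self, smul_eq_mul, smul_eq_mul]
  field_simp

lemma gaussMap_ne_zero (hreg : pd 0 x u ⨯₃ pd 1 x u ≠ 0) : gaussMap x u ≠ 0 :=
  smul_ne_zero (inv_ne_zero (norm3_pos hreg).ne') hreg

lemma contDiffAt_gaussMap {m n : WithTop ℕ∞} (hx : ContDiffAt ℝ n x u) (hmn : m + 1 ≤ n)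
    (hreg : pd 0 x u ⨯₃ pd 1 x u ≠ 0) : ContDiffAt ℝ m (gaussMap x) u := by
  have hcross : ContDiffAt ℝ m (fun v => pd 0 x v ⨯₃ pd 1 x v) u :=
    contDiffAt_bilinear crossProduct (contDiffAt_pd hx hmn 0) (contDiffAt_pd hx hmn 1)
  have hsq : ContDiffAt ℝ m (fun v => dot3 (pd 0 x v ⨯₃ pd 1 x v) (pd 0 x v ⨯₃ pd 1 x v)) u :=
    contDiffAt_bilinear (dotProductBilin ℝ ℝ) hcross hcross
  have hnorm : ContDiffAt ℝ m (fun v => norm3 (pd 0 x v ⨯₃ pd 1 x v)) u :=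
    hsq.sqrt (dotProduct_self_star_pos_iff.2 hreg).ne'
  exact (hnorm.inv (norm3_pos hreg).ne').smul hcross

lemma differentiableAt_gaussMap (hx : ContDiffAt ℝ 2 x u) (hreg : pd 0 x u ⨯₃ pd 1 x u ≠ 0) :
    DifferentiableAt ℝ (gaussMap x) u :=
  (contDiffAt_gaussMap hx (m := 1) (by norm_num) hreg).differentiableAt one_ne_zero

lemma pd_gaussMap_dotProduct_gaussMap (hx : ContDiffAt ℝ 2 x u)
    (hreg : pd 0 x u ⨯₃ pd 1 x u ≠ 0) (i : Fin 2) :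
    pd i (gaussMap x) u ⬝ᵥ gaussMap x u = 0 := by
  have hunit : ∀ᶠ v in 𝓝 u, gaussMap x v ⬝ᵥ gaussMap x v = 1 :=
    (eventually_cross_pd_ne_zero hx one_le_two hreg).mono fun _ => gaussMap_dotProduct_self
  exact pd_dotProduct_self_eq_zero (differentiableAt_gaussMap hx hreg) hunit i

lemma pd_gaussMap_dotProduct_pd (hx : ContDiffAt ℝ 2 x u) (hreg : pd 0 x u ⨯₃ pd 1 x u ≠ 0)
    (i j : Fin 2) : pd i (gaussMap x) u ⬝ᵥ pd j x u = -fformII x u i j := by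
  have h := pd_dotProduct_add_dotProduct_pd_eq_zero (differentiableAt_gaussMap hx hreg)
    (differentiableAt_pd hx j) (.of_forall fun v => gaussMap_dotProduct_pd x v j) i
  rw [fformII_apply, dotProduct_comm (pd i (pd j x) u)]
  linarith

lemma fformII_apply_comm (hx : ContDiffAt ℝ 2 x u) (i j : Fin 2) :
    fformII x u i j = fformII x u j i := by
  rw [fformII_apply, fformII_apply, pd_comm hx]

lemma exists_gaussMap_eq_smul {n : Vec3} (hreg : pd 0 x u ⨯₃ pd 1 x u ≠ 0) (hn : n ⬝ᵥ n = 1)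
    (horth : ∀ i, pd i x u ⬝ᵥ n = 0) : ∃ σ : ℝ, σ * σ = 1 ∧ gaussMap x u = σ • n := by
  have hpar : gaussMap x u =
      ((norm3 (pd 0 x u ⨯₃ pd 1 x u))⁻¹ * (pd 0 x u ⨯₃ pd 1 x u ⬝ᵥ n)) • n := by
    rw [mul_smul, ← cross_eq_smul_of_dotProduct_eq_zero hn (horth 0) (horth 1), gaussMap]
  refine ⟨_, ?_, hpar⟩
  have hunit := gaussMap_dotProduct_self hreg
  rwa [hpar, smul_dotProduct, dotProduct_smul, hn, smul_eq_mul, smul_eq_mul, mul_one] at hunit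

end GaussMap

section Curvature

variable {x : Param → Vec3} {u : Param}

lemma two_mul_meanCurv_eq_trace (hx : ContDiffAt ℝ 2 x u) :
    2 * meanCurv x u = ((fformI x u)⁻¹ * fformII x u).trace := by
  simp only [meanCurv, Matrix.trace, Matrix.diag, Matrix.mul_apply, Fin.sum_univ_two,
    fformII_apply_comm hx 1 0]
  ring

lemma two_mul_meanCurv_mul_det_fformI (hx : ContDiffAt ℝ 2 x u)
    (hreg : pd 0 x u ⨯₃ pd 1 x u ≠ 0) :
    2 * meanCurv x u * (fformI x u).det =
      fformI x u 1 1 * fformII x u 0 0 - 2 * (fformI x u 0 1 * fformII x u 0 1) +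
        fformI x u 0 0 * fformII x u 1 1 := by
  have hdet := det_fformI_ne_zero_iff.2 hreg
  rw [two_mul_meanCurv_eq_trace hx]
  simp only [Matrix.trace_fin_two, Matrix.mul_apply, Fin.sum_univ_two, inv_apply_eq_inv_det_mul,
    Matrix.adjugate_fin_two, Matrix.of_apply, Matrix.cons_val, fformII_apply_comm hx 1 0,
    fformI_apply_comm x u 1 0]
  field_simp
  ring

lemma det_fformI_mul_fformIII_apply (hx : ContDiffAt ℝ 2 x u)
    (hreg : pd 0 x u ⨯₃ pd 1 x u ≠ 0) (i j : Fin 2) :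
    (fformI x u).det * fformIII x u i j =
      fformI x u 1 1 * (fformII x u i 0 * fformII x u j 0) -
        fformI x u 0 1 * (fformII x u i 0 * fformII x u j 1 + fformII x u i 1 * fformII x u j 0) +
        fformI x u 0 0 * (fformII x u i 1 * fformII x u j 1) := by
  have hgram := gram_det_mul_dotProduct (pd 0 x u) (pd 1 x u) (pd i (gaussMap x) u)
    (pd j (gaussMap x) u)
  have htangent : pd i (gaussMap x) u ⬝ᵥ (pd 0 x u ⨯₃ pd 1 x u) = 0 := by
    rw [← norm3_smul_gaussMap hreg, dotProduct_smul, pd_gaussMap_dotProduct_gaussMap hx hreg,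
      smul_zero]
  simp only [htangent, pd_gaussMap_dotProduct_pd hx hreg, ← fformI_apply] at hgram
  rw [Matrix.det_fin_two, fformIII_eq_fformI_gaussMap, fformI_apply_comm x u 1 0, hgram]
  ring

lemma fformIII_eq_fformII_mul_inv_mul (hx : ContDiffAt ℝ 2 x u)
    (hreg : pd 0 x u ⨯₃ pd 1 x u ≠ 0) :
    fformIII x u = fformII x u * (fformI x u)⁻¹ * fformII x u := by
  have hdet := det_fformI_ne_zero_iff.2 hreg
  ext i j
  apply mul_left_cancel₀ hdet
  rw [det_fformI_mul_fformIII_apply hx hreg]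
  simp only [Matrix.mul_apply, Fin.sum_univ_two, inv_apply_eq_inv_det_mul,
    Matrix.adjugate_fin_two, Matrix.of_apply, Matrix.cons_val, fformII_apply_comm hx _ j,
    fformI_apply_comm x u 1 0]
  field_simp
  ring

theorem fformIII_eq_meanCurv_smul_sub_gaussCurv_smul (hx : ContDiffAt ℝ 2 x u)
    (hreg : pd 0 x u ⨯₃ pd 1 x u ≠ 0) :
    fformIII x u = (2 * meanCurv x u) • fformII x u - gaussCurv x u • fformI x u := by
  rw [fformIII_eq_fformII_mul_inv_mul hx hreg,
    mul_inv_mul_eq_trace_smul_sub _ (det_fformI_ne_zero_iff.2 hreg), two_mul_meanCurv_eq_trace hx,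
    gaussCurv]

lemma cross_pd_gaussMap_ne_zero (hx : ContDiffAt ℝ 2 x u) (hreg : pd 0 x u ⨯₃ pd 1 x u ≠ 0)
    (hII : (fformII x u).det ≠ 0) : pd 0 (gaussMap x) u ⨯₃ pd 1 (gaussMap x) u ≠ 0 := by
  have hI := det_fformI_ne_zero_iff.2 hreg
  rw [← det_fformI_ne_zero_iff, ← fformIII_eq_fformI_gaussMap,
    fformIII_eq_fformII_mul_inv_mul hx hreg, Matrix.det_mul, Matrix.det_mul,
    Matrix.det_nonsing_inv, Ring.inverse_eq_inv']
  exact mul_ne_zero (mul_ne_zero hII (inv_ne_zero hI)) hII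

lemma gaussCurv_neg_of_meanCurv_eq_zero (hx : ContDiffAt ℝ 2 x u)
    (hreg : pd 0 x u ⨯₃ pd 1 x u ≠ 0) (hII : (fformII x u).det ≠ 0) (hH : meanCurv x u = 0) :
    gaussCurv x u < 0 := by
  have hK : gaussCurv x u ≠ 0 := div_ne_zero hII (det_fformI_ne_zero_iff.2 hreg)
  have hIII : fformIII x u 0 0 = -gaussCurv x u * fformI x u 0 0 := by
    rw [fformIII_eq_meanCurv_smul_sub_gaussCurv_smul hx hreg, hH]
    simp
  have hIII_nonneg : 0 ≤ fformIII x u 0 0 :=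
    dotProduct_self_star_nonneg (pd 0 (gaussMap x) u)
  have hI_pos : 0 < fformI x u 0 0 := by
    refine (dotProduct_self_star_pos_iff (v := pd 0 x u)).2 fun h0 => hreg ?_
    rw [h0, map_zero, LinearMap.zero_apply]
  rw [hIII] at hIII_nonneg
  have hK_nonpos := nonneg_of_mul_nonneg_left hIII_nonneg hI_pos
  exact lt_of_le_of_ne (by linarith) hK

end Curvature

section BeltramiFormula

variable {x : Param → Vec3} {u : Param}

lemma sqrt_abs_det_mul_inv_fformI (hreg : pd 0 x u ⨯₃ pd 1 x u ≠ 0) (i j : Fin 2) :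
    √|(fformI x u).det| * (fformI x u)⁻¹ i j =
      (norm3 (pd 0 x u ⨯₃ pd 1 x u))⁻¹ * (fformI x u).adjugate i j := by
  have hW := (norm3_pos hreg).ne'
  rw [sqrt_abs_det_fformI, inv_apply_eq_inv_det_mul, det_fformI]
  field_simp

lemma beltramiFlux_fformI_self_zero (hreg : pd 0 x u ⨯₃ pd 1 x u ≠ 0) :
    beltramiFlux (fformI x) x 0 u = pd 1 x u ⨯₃ gaussMap x u := by
  rw [beltramiFlux, gaussMap, map_smul, cross_cross_eq_smul_sub_smul', Fin.sum_univ_two]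
  simp only [sqrt_abs_det_mul_inv_fformI hreg, Matrix.adjugate_fin_two, Matrix.of_apply,
    Matrix.cons_val, fformI_apply]
  module

lemma beltramiFlux_fformI_self_one (hreg : pd 0 x u ⨯₃ pd 1 x u ≠ 0) :
    beltramiFlux (fformI x) x 1 u = gaussMap x u ⨯₃ pd 0 x u := by
  rw [beltramiFlux, gaussMap, map_smul, LinearMap.smul_apply, cross_cross_eq_smul_sub_smul,
    Fin.sum_univ_two]
  simp only [sqrt_abs_det_mul_inv_fformI hreg, Matrix.adjugate_fin_two, Matrix.of_apply,
    Matrix.cons_val, fformI_apply]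
  module

lemma pd_gaussMap_cross_add_cross_pd_gaussMap_dotProduct (hx : ContDiffAt ℝ 2 x u)
    (hreg : pd 0 x u ⨯₃ pd 1 x u ≠ 0) :
    (pd 0 (gaussMap x) u ⨯₃ pd 1 x u + pd 0 x u ⨯₃ pd 1 (gaussMap x) u) ⬝ᵥ
      (pd 0 x u ⨯₃ pd 1 x u) = -(2 * meanCurv x u) * (fformI x u).det := by
  rw [add_dotProduct, cross_dot_cross, cross_dot_cross, neg_mul,
    two_mul_meanCurv_mul_det_fformI hx hreg]
  simp only [pd_gaussMap_dotProduct_pd hx hreg, ← fformI_apply, fformI_apply_comm x u 1 0,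
    fformII_apply_comm hx 1 0]
  ring

lemma pd_gaussMap_cross_add_cross_pd_gaussMap (hx : ContDiffAt ℝ 2 x u)
    (hreg : pd 0 x u ⨯₃ pd 1 x u ≠ 0) :
    pd 0 (gaussMap x) u ⨯₃ pd 1 x u + pd 0 x u ⨯₃ pd 1 (gaussMap x) u =
      -(2 * meanCurv x u) • (pd 0 x u ⨯₃ pd 1 x u) := by
  have hn := gaussMap_dotProduct_self hreg
  have hx_orth (j : Fin 2) : pd j x u ⬝ᵥ gaussMap x u = 0 := by
    rw [dotProduct_comm, gaussMap_dotProduct_pd]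
  have hn_orth := pd_gaussMap_dotProduct_gaussMap hx hreg
  have hdot := pd_gaussMap_cross_add_cross_pd_gaussMap_dotProduct hx hreg
  rw [det_fformI] at hdot
  rw [cross_eq_smul_of_dotProduct_eq_zero hn (hn_orth 0) (hx_orth 1),
    cross_eq_smul_of_dotProduct_eq_zero hn (hx_orth 0) (hn_orth 1), ← add_smul,
    ← add_dotProduct, ← norm3_smul_gaussMap hreg, smul_smul]
  congr 1
  apply mul_left_cancel₀ (norm3_pos hreg).ne'
  rw [← smul_eq_mul, ← dotProduct_smul, norm3_smul_gaussMap hreg, hdot]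
  ring

theorem beltrami2_fformI_self (hx : ContDiffAt ℝ 2 x u) (hreg : pd 0 x u ⨯₃ pd 1 x u ≠ 0) :
    beltrami2 (fformI x) x u = -(2 * meanCurv x u) • gaussMap x u := by
  have hreg_near := eventually_cross_pd_ne_zero hx one_le_two hreg
  have hn := differentiableAt_gaussMap hx hreg
  have hdiv_zero : pd 0 (beltramiFlux (fformI x) x 0) u =
      pd 0 (pd 1 x) u ⨯₃ gaussMap x u + pd 1 x u ⨯₃ pd 0 (gaussMap x) u := by
    rw [← pd_cross (differentiableAt_pd hx 1) hn]
    exact pd_congr (hreg_near.mono fun _ => beltramiFlux_fformI_self_zero) 0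
  have hdiv_one : pd 1 (beltramiFlux (fformI x) x 1) u =
      pd 1 (gaussMap x) u ⨯₃ pd 0 x u + gaussMap x u ⨯₃ pd 0 (pd 1 x) u := by
    rw [pd_comm hx 0 1, ← pd_cross hn (differentiableAt_pd hx 0)]
    exact pd_congr (hreg_near.mono fun _ => beltramiFlux_fformI_self_one) 1
  have hdiv : ∑ i, pd i (beltramiFlux (fformI x) x i) u =
      (2 * meanCurv x u) • (pd 0 x u ⨯₃ pd 1 x u) := by
    rw [Fin.sum_univ_two, hdiv_zero, hdiv_one, ← neg_inj, ← neg_smul,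
      ← pd_gaussMap_cross_add_cross_pd_gaussMap hx hreg,
      ← cross_anticomm (gaussMap x u) (pd 0 (pd 1 x) u),
      ← cross_anticomm (pd 0 (gaussMap x) u), ← cross_anticomm (pd 0 x u)]
    abel
  rw [beltrami2_eq_sum_pd_beltramiFlux (differentiableAt_fformI hx)
    (det_fformI_ne_zero_iff.2 hreg) hx, hdiv, sqrt_abs_det_fformI, smul_comm, gaussMap, neg_smul]

end BeltramiFormula

section NullType

variable {x : Param → Vec3} {u : Param}

lemma fformII_eq_neg_smul_fformI_of_sphere {σ : ℝ} (hx : ContDiffAt ℝ 2 x u)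
    (hsphere : ∀ᶠ v in 𝓝 u, x v ⬝ᵥ x v = 1) (hσ : gaussMap x u = σ • x u) :
    fformII x u = -σ • fformI x u := by
  have htangent (j : Fin 2) : ∀ᶠ v in 𝓝 u, pd j x v ⬝ᵥ x v = 0 := by
    filter_upwards [hsphere.eventually_nhds, hx.eventually (by simp)] with v hv hxv
    exact pd_dotProduct_self_eq_zero (hxv.differentiableAt two_ne_zero) hv j
  ext i j
  have h := pd_dotProduct_add_dotProduct_pd_eq_zero (differentiableAt_pd hx j)
    (hx.differentiableAt two_ne_zero) (htangent j) i
  rw [Matrix.smul_apply, fformI_apply_comm, fformI_apply, fformII_apply, hσ, dotProduct_smul,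
    eq_neg_of_add_eq_zero_left h, smul_neg, neg_smul]

theorem beltrami2_fformI_self_of_sphere (hx : ContDiffAt ℝ 2 x u)
    (hreg : pd 0 x u ⨯₃ pd 1 x u ≠ 0) (hsphere : ∀ᶠ v in 𝓝 u, x v ⬝ᵥ x v = 1) :
    beltrami2 (fformI x) x u = (2 : ℝ) • x u := by
  obtain ⟨σ, hσσ, hσ⟩ := exists_gaussMap_eq_smul hreg hsphere.self_of_nhds
    (pd_dotProduct_self_eq_zero (hx.differentiableAt two_ne_zero) hsphere)
  have hH : 2 * meanCurv x u = -σ * 2 := by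
    rw [two_mul_meanCurv_eq_trace hx, fformII_eq_neg_smul_fformI_of_sphere hx hsphere hσ,
      Matrix.mul_smul, Matrix.nonsing_inv_mul _ (det_fformI_ne_zero_iff.2 hreg).isUnit,
      Matrix.trace_smul, Matrix.trace_one, Fintype.card_fin, smul_eq_mul, Nat.cast_ofNat]
  rw [beltrami2_fformI_self hx hreg, hH, hσ, smul_smul]
  congr 1
  linear_combination 2 * hσσ

theorem beltrami2_fformIII_gaussMap (hx : ContDiffAt ℝ 3 x u) (hreg : pd 0 x u ⨯₃ pd 1 x u ≠ 0)
    (hII : (fformII x u).det ≠ 0) :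
    beltrami2 (fformIII x) (gaussMap x) u = (2 : ℝ) • gaussMap x u := by
  have hx2 : ContDiffAt ℝ 2 x u := hx.of_le (by norm_num)
  rw [fformIII_eq_fformI_gaussMap]
  exact beltrami2_fformI_self_of_sphere (contDiffAt_gaussMap hx (by norm_num) hreg)
    (cross_pd_gaussMap_ne_zero hx2 hreg hII)
    ((eventually_cross_pd_ne_zero hx2 one_le_two hreg).mono fun _ => gaussMap_dotProduct_self)

lemma beltrami2_fformIII_add_smul_gaussMap (hx : ContDiffAt ℝ 3 x u)
    (hreg : pd 0 x u ⨯₃ pd 1 x u ≠ 0) (hII : (fformII x u).det ≠ 0) (c : ℝ) :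
    beltrami2 (fformIII x) (fun v => x v + c • gaussMap x v) u =
      beltrami2 (fformIII x) x u + (2 : ℝ) • (c • gaussMap x u) := by
  have hx2 : ContDiffAt ℝ 2 x u := hx.of_le (by norm_num)
  have hn2 : ContDiffAt ℝ 2 (gaussMap x) u := contDiffAt_gaussMap hx (by norm_num) hreg
  have hIII : (fformIII x u).det ≠ 0 :=
    det_fformI_ne_zero_iff.2 (cross_pd_gaussMap_ne_zero hx2 hreg hII)
  have hdiff (i j) : DifferentiableAt ℝ (fun v => fformIII x v i j) u :=
    differentiableAt_fformI hn2 i j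
  rw [beltrami2_add hdiff hIII hx2 (hn2.const_smul c),
    beltrami2_const_smul, beltrami2_fformIII_gaussMap hx hreg hII, smul_comm]

theorem beltrami2_fformIII_eq_zero_of_minimal (hx : ContDiffAt ℝ 2 x u)
    (hreg : pd 0 x u ⨯₃ pd 1 x u ≠ 0) (hII : ∀ᶠ v in 𝓝 u, (fformII x v).det ≠ 0)
    (hmin : ∀ᶠ v in 𝓝 u, meanCurv x v = 0) : beltrami2 (fformIII x) x u = 0 := by
  have hx_near := hx.eventually (by simp)
  have hreg_near := eventually_cross_pd_ne_zero hx one_le_two hreg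
  have hconformal : ∀ᶠ v in 𝓝 u, fformIII x v = -gaussCurv x v • fformI x v := by
    filter_upwards [hx_near, hreg_near, hmin] with v hxv hregv hHv
    rw [fformIII_eq_meanCurv_smul_sub_gaussCurv_smul hxv hregv, hHv, mul_zero, zero_smul, zero_sub,
      neg_smul]
  have hpos : ∀ᶠ v in 𝓝 u, 0 < -gaussCurv x v := by
    filter_upwards [hx_near, hreg_near, hII, hmin] with v hxv hregv hIIv hHv
    exact neg_pos.2 (gaussCurv_neg_of_meanCurv_eq_zero hxv hregv hIIv hHv)
  rw [beltrami2_of_conformal hconformal hpos, beltrami2_fformI_self hx hreg, hmin.self_of_nhds,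
    mul_zero, neg_zero, zero_smul, smul_zero]

lemma nonconstOn_of_cross_pd_ne_zero {U : Set Param} (hU : IsOpen U) (hu : u ∈ U)
    (hreg : pd 0 x u ⨯₃ pd 1 x u ≠ 0) : NonconstOn x U := by
  rintro ⟨c, hc⟩
  have hconst : x =ᶠ[𝓝 u] fun _ => c := eventually_of_mem (hU.mem_nhds hu) hc
  apply hreg
  rw [pd_congr hconst 0, pd, fderiv_fun_const, Pi.zero_apply, _root_.zero_apply, map_zero,
    LinearMap.zero_apply]

lemma nonconstOn_const_smul {f : Param → Vec3} {U : Set Param} {c : ℝ} (hc : c ≠ 0)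
    (hf : NonconstOn f U) : NonconstOn (fun v => c • f v) U := by
  rintro ⟨w, hw⟩
  exact hf ⟨c⁻¹ • w, fun v hv => by rw [← hw v hv, inv_smul_smul₀ hc]⟩

end NullType

theorem stmt18_general {U : Set Param} {x : Param → Vec3} (hU : IsOpen U) (hne : U.Nonempty)
    (hx : ContDiffOn ℝ 3 x U) (himm : Immersed x U) (hpar : ∀ u ∈ U, (fformII x u).det ≠ 0)
    (hmin : ∀ u ∈ U, meanCurv x u = 0) {ρ : ℝ} (hρ : ρ ≠ 0) :
    (∀ u ∈ U, beltrami2 (fformIII x) x u = 0) ∧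
    (∀ u ∈ U, beltrami2 (fformIII x) (fun v => ρ • gaussMap x v) u =
      (2 : ℝ) • (ρ • gaussMap x u)) ∧
    NonconstOn x U ∧
    NonconstOn (fun v => ρ • gaussMap x v) U ∧
    ¬ (∀ u ∈ U, beltrami2 (fformIII x) (fun v => x v + ρ • gaussMap x v) u = 0) := by
  have hreg (u) (hu : u ∈ U) : pd 0 x u ⨯₃ pd 1 x u ≠ 0 :=
    crossProduct_ne_zero_iff_linearIndependent.2 (himm u hu)
  have hx3 (u) (hu : u ∈ U) : ContDiffAt ℝ 3 x u := hx.contDiffAt (hU.mem_nhds hu)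
  have hx2 (u) (hu : u ∈ U) : ContDiffAt ℝ 2 x u := (hx3 u hu).of_le (by norm_num)
  have hΔx (u) (hu : u ∈ U) : beltrami2 (fformIII x) x u = 0 :=
    beltrami2_fformIII_eq_zero_of_minimal (hx2 u hu) (hreg u hu)
      (eventually_of_mem (hU.mem_nhds hu) hpar) (eventually_of_mem (hU.mem_nhds hu) hmin)
  obtain ⟨u₀, hu₀⟩ := hne
  refine ⟨hΔx, fun u hu => ?_, nonconstOn_of_cross_pd_ne_zero hU hu₀ (hreg u₀ hu₀),
    nonconstOn_const_smul hρ (nonconstOn_of_cross_pd_ne_zero hU hu₀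
      (cross_pd_gaussMap_ne_zero (hx2 u₀ hu₀) (hreg u₀ hu₀) (hpar u₀ hu₀))), fun hΔ => ?_⟩
  · rw [beltrami2_const_smul, beltrami2_fformIII_gaussMap (hx3 u hu) (hreg u hu) (hpar u hu),
      smul_comm]
  · have h := hΔ u₀ hu₀
    rw [beltrami2_fformIII_add_smul_gaussMap (hx3 u₀ hu₀) (hreg u₀ hu₀) (hpar u₀ hu₀),
      hΔx u₀ hu₀, zero_add] at h
    exact smul_ne_zero two_ne_zero (smul_ne_zero hρ (gaussMap_ne_zero (hreg u₀ hu₀))) h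

/-- Theorem 4.3: if `M` is minimal without parabolic points, then every
parallel surface `x* = x + ρ n` of `M` is of null III-type 2 with respect to the common
third fundamental form: `x* = x + (ρ n)` with `Δ^{III} x = 0`, `Δ^{III}(ρ n) = 2(ρ n)`,
both summands nonconstant, and `x*` is not of null III-type 1 (`Δ^{III} x* ≠ 0`). -/
theorem stmt18 (U : Set Param) (x : Param → Vec3)
    (hU : IsOpen U) (hUconn : IsConnected U)
    (hx : ContDiffOn ℝ (⊤ : ℕ∞) x U) (himm : Immersed x U)
    (hpar : ∀ u ∈ U, (fformII x u).det ≠ 0)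
    (hmin : ∀ u ∈ U, meanCurv x u = 0)
    (ρ : ℝ) (hρ : ρ ≠ 0)
    (hreg : ∀ u ∈ U, 1 + ρ ^ 2 * gaussCurv x u ≠ 0) :
    (∀ u ∈ U, beltrami2 (fformIII x) x u = 0) ∧
    (∀ u ∈ U, beltrami2 (fformIII x) (fun v => ρ • gaussMap x v) u =
      (2 : ℝ) • (ρ • gaussMap x u)) ∧
    NonconstOn x U ∧
    NonconstOn (fun v => ρ • gaussMap x v) U ∧
    ¬ (∀ u ∈ U, beltrami2 (fformIII x) (fun v => x v + ρ • gaussMap x v) u = 0) := by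
  exact stmt18_general hU hUconn.nonempty
    (hx.of_le (WithTop.coe_le_coe.2 (le_top (a := (3 : ℕ∞))))) himm hpar hmin hρ
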